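/- Let ε ∈ (0,1) be irrational with continued fraction expansion ε = [0; a_1, a_2, …], and let q_N denote the denominators of the convergents of ε, i.e. q_{−1} = 0, q_0 = 1, q_N = a_N q_{N−1} + q_{N−2} for N ≥ 1. Then for every x0 ∈ [0,1), the index of the Sturmian word u_{ε,x0} of slope ε satisfies ind(u_{ε,x0}) = sup{ 2 + a_{N+1} + (q_{N−1} − 2)/q_N : N ≥ 0 } (as elements of ℝ ∪ {+∞}). -/

import Mathlib

/-!
The orbit of `x0` under `T2 ε` is `fract (x0 - n ε)`. A fractional power of exponent `1 + L / p` is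
a run of `L` consecutive coincidences `u_j = u_{j+p}`, so the index is the supremum of `1 + L / p`
over all runs.

Put `f = fract (p ε)`. The letters at `j` and `j + p` say whether the points `y` and `y - p ε`
lie in the arc `[0, ε)`, where `y = x0 - j ε`. Counting integers in `(y - ε - f, y]` in two ways
shows that these letters agree iff `y` and `y - ε` lie on the same side of the partition of the
circle into `[0, f)` and `[f, 1)`. Hence a run of `L` coincidences is a stay of the orbit in one of
these two arcs for `L + 1` consecutive times.

Let `η_N = |q_N ε - p_N|`. Any `q_N + q_{N+1}` consecutive points of an orbit meet every arc of
length `η_N`, and if `q_N ≤ p < q_{N+1}` then both arcs have length at least `η_N` by best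
approximation; hence `L + 2 ≤ q_N + q_{N+1}`. For `p = q_N` one of the arcs has length exactly
`η_N`, and suitable points leave it for `q_N + q_{N+1} - 1` steps, so the bound is attained.
The exponent `1 + (q_N + q_{N+1} - 2) / q_N` equals `2 + a_{N+1} + (q_{N-1} - 2) / q_N`.
-/

/-- The alphabet of 3iet words. -/
inductive L3 | A | B | C
deriving DecidableEq, Inhabited

/-- The three-interval exchange transformation `T_{ε,ℓ}`. -/
noncomputable def T3 (ε ℓ : ℝ) (x : ℝ) : ℝ :=
  if x < ℓ - 1 + ε then x + 1 - ε
  else if x < ε then x + 1 - 2*ε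
  else x - ε

/-- The 3iet word `u_{ε,ℓ,x0}` coding the orbit of `x0` under `T_{ε,ℓ}`. -/
noncomputable def u3 (ε ℓ x0 : ℝ) (n : ℕ) : L3 :=
  if (T3 ε ℓ)^[n] x0 < ℓ - 1 + ε then L3.A
  else if (T3 ε ℓ)^[n] x0 < ε then L3.B
  else L3.C

/-- The two-interval exchange transformation `T_ε`. -/
noncomputable def T2 (ε : ℝ) (x : ℝ) : ℝ := if x < ε then x + 1 - ε else x - ε

/-- The Sturmian word `u_{ε,x0}` of slope `ε` coding the orbit of `x0` under `T_ε`
(letter `0` is `false`, letter `1` is `true`). -/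
noncomputable def u2 (ε x0 : ℝ) (n : ℕ) : Bool := if (T2 ε)^[n] x0 < ε then false else true

/-- `w` is a factor of the infinite word `u`. -/
def IsFactor {α : Type*} (w : List α) (u : ℕ → α) : Prop :=
  ∃ i : ℕ, w = (List.range w.length).map fun j => u (i + j)

/-- The prefix of length `m` of the periodic infinite word `www⋯`;
for `|w| ≤ m` this is the fractional power `w^{m/|w|}`. -/
def powPrefix {α : Type*} [Inhabited α] (w : List α) (m : ℕ) : List α :=
  (List.range m).map fun j => w.getD (j % w.length) default

/-- The index of the factor `w` in the infinite word `u`: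
`sup {r ∈ ℚ, r ≥ 1, r|w| ∈ ℕ | w^r is a factor of u}`, as an element of `ℝ ∪ {+∞}`. -/
noncomputable def factorIndex {α : Type*} [Inhabited α] (u : ℕ → α) (w : List α) : EReal :=
  sSup {x : EReal | ∃ m : ℕ, w.length ≤ m ∧ IsFactor (powPrefix w m) u ∧
    x = (((m : ℝ) / (w.length : ℝ) : ℝ) : EReal)}

/-- The index of the infinite word `u`: `sup {ind(w) | w a nonempty factor of u}`. -/
noncomputable def wordIndex {α : Type*} [Inhabited α] (u : ℕ → α) : EReal :=
  sSup {x : EReal | ∃ w : List α, w ≠ [] ∧ IsFactor w u ∧ x = factorIndex u w}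

/-- The Gauss map `x ↦ {1/x}`. -/
noncomputable def gaussMap (x : ℝ) : ℝ := Int.fract x⁻¹

/-- `cfa ε n` is the partial quotient `a_{n+1}` of the continued fraction
expansion `ε = [0; a₁, a₂, a₃, …]` of the irrational `ε ∈ (0,1)`. -/
noncomputable def cfa (ε : ℝ) (n : ℕ) : ℕ := ⌊(gaussMap^[n] ε)⁻¹⌋₊

/-- The morphism `σ01 : A ↦ 0, B ↦ 01, C ↦ 1`. -/
def sigma01 : L3 → List Bool
  | L3.A => [false]
  | L3.B => [false, true]
  | L3.C => [true]

/-- The morphism `σ10 : A ↦ 0, B ↦ 10, C ↦ 1`. -/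
def sigma10 : L3 → List Bool
  | L3.A => [false]
  | L3.B => [true, false]
  | L3.C => [true]

/-- The image `φ(u₀)φ(u₁)φ(u₂)⋯` of an infinite word `u` under a (nonerasing) morphism `φ`. -/
def morphWord (φ : L3 → List Bool) (u : ℕ → L3) (m : ℕ) : Bool :=
  ((List.range (m+1)).flatMap fun k => φ (u k)).getD m false

/-- `u` is a uniformly recurrent infinite word: every factor occurs infinitely often
with bounded gaps (every window of some length `R` contains an occurrence). -/
def UniformlyRecurrent {α : Type*} (u : ℕ → α) : Prop :=
  ∀ w : List α, IsFactor w u → ∃ R : ℕ, ∀ i : ℕ, ∃ j : ℕ, i ≤ j ∧ j < i + R ∧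
    w = (List.range w.length).map fun t => u (j + t)

/-- `u` is eventually periodic. -/
def EventuallyPeriodic {α : Type*} (u : ℕ → α) : Prop :=
  ∃ N p : ℕ, 0 < p ∧ ∀ n : ℕ, N ≤ n → u (n + p) = u n

/-- The standard words of `ε = [0; a₁, a₂, …]`, with the index shifted by one:
`sw ε 0 = s₋₁ = 1`, `sw ε 1 = s₀ = 0`, `sw ε 2 = s₁ = s₀^{a₁-1} s₋₁`, and
`sw ε (n+3) = s_{n+2} = s_{n+1}^{a_{n+2}} s_n`. -/
noncomputable def sw (ε : ℝ) : ℕ → List Bool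
  | 0 => [true]
  | 1 => [false]
  | 2 => (List.replicate (cfa ε 0 - 1) ([false] : List Bool)).flatten ++ [true]
  | (n+3) => (List.replicate (cfa ε (n+1)) (sw ε (n+2))).flatten ++ sw ε (n+1)

/-- Denominators of the convergents of `ε`, shifted by one: `qq ε 0 = q₋₁ = 0`,
`qq ε 1 = q₀ = 1`, and `qq ε (n+2) = q_{n+1} = a_{n+1} q_n + q_{n-1}`. -/
noncomputable def qq (ε : ℝ) : ℕ → ℕ
  | 0 => 0
  | 1 => 1
  | (n+2) => cfa ε n * qq ε (n+1) + qq ε n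

/-- `u` is a 3iet word. -/
def Is3ietWord (u : ℕ → L3) : Prop :=
  ∃ ε ℓ x0 : ℝ, Irrational ε ∧ 0 < ε ∧ ε < 1 ∧ max ε (1 - ε) < ℓ ∧ ℓ < 1 ∧
    x0 ∈ Set.Ico 0 ℓ ∧ u = u3 ε ℓ x0

/-- `v` is a Sturmian word. -/
def IsSturmianWord (v : ℕ → Bool) : Prop :=
  ∃ ε x0 : ℝ, Irrational ε ∧ 0 < ε ∧ ε < 1 ∧ x0 ∈ Set.Ico (0:ℝ) 1 ∧ v = u2 ε x0

/-- The infinite binary word `v1` is amicable with `v2` (`v1 ∝ v2`). -/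
def AmicableInf (v1 v2 : ℕ → Bool) : Prop :=
  ∃ w : ℕ → L3, v1 = morphWord sigma01 w ∧ v2 = morphWord sigma10 w

/-- The morphism `Φ_k : A ↦ 0, B ↦ 01^{k+1}, C ↦ 01^k`. -/
def Phi (k : ℕ) : L3 → List Bool
  | L3.A => [false]
  | L3.B => false :: List.replicate (k+1) true
  | L3.C => false :: List.replicate k true

/-- The infinite word `B₀B₁B₂⋯` obtained by concatenating the sequence of
(nonempty) blocks `B`. -/
def concatOfBlocks (B : ℕ → List Bool) (m : ℕ) : Bool :=
  ((List.range (m+1)).flatMap B).getD m false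

/-! ### Runs and the index of an infinite word -/

/-- The factor of `u` of length `n` starting at position `i`. -/
def subword {α : Type*} (u : ℕ → α) (i n : ℕ) : List α :=
  (List.range n).map fun j => u (i + j)

/-- The letters of `u` at positions `i, …, i + L - 1` agree with those `p` places further on, i.e.
the factor of length `p + L` at position `i` has period `p`. -/
def IsRun {α : Type*} (u : ℕ → α) (p i L : ℕ) : Prop :=
  ∀ j < L, u (i + j) = u (i + j + p)

section Words

variable {α : Type*} {u : ℕ → α} {p i L : ℕ}

@[simp]
lemma length_subword (u : ℕ → α) (i n : ℕ) : (subword u i n).length = n := by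
  simp [subword]

lemma isFactor_subword (u : ℕ → α) (i n : ℕ) : IsFactor (subword u i n) u :=
  ⟨i, by rw [length_subword]; rfl⟩

lemma IsRun.apply_mod (h : IsRun u p i L) : ∀ j < p + L, u (i + j % p) = u (i + j) := by
  intro j
  induction j using Nat.strong_induction_on with
  | _ j ih =>
    intro hj
    rcases lt_or_ge j p with hjp | hpj
    · rw [Nat.mod_eq_of_lt hjp]
    · rcases Nat.eq_zero_or_pos p with rfl | hp
      · rw [Nat.mod_zero]
      · obtain ⟨t, rfl⟩ := Nat.exists_eq_add_of_le' hpj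
        rw [Nat.add_mod_right, ih t (by omega) (by omega), h t (by omega), add_assoc]

variable [Inhabited α]

lemma isFactor_powPrefix_iff {w : List α} {m : ℕ} :
    IsFactor (powPrefix w m) u ↔ ∃ i, ∀ j < m, w.getD (j % w.length) default = u (i + j) := by
  simp [IsFactor, powPrefix, List.map_inj_left]

lemma exists_isRun_of_isFactor_powPrefix {w : List α}
    (h : IsFactor (powPrefix w (w.length + L)) u) : ∃ i, IsRun u w.length i L := by
  obtain ⟨i, hi⟩ := isFactor_powPrefix_iff.mp h
  refine ⟨i, fun j hj => ?_⟩
  rw [← hi j (by omega), add_assoc, ← hi (j + w.length) (by omega), Nat.add_mod_right]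

lemma IsRun.isFactor_powPrefix_subword (h : IsRun u p i L) (hp : 0 < p) :
    IsFactor (powPrefix (subword u i p) (p + L)) u := by
  refine isFactor_powPrefix_iff.mpr ⟨i, fun j hj => ?_⟩
  rw [length_subword, List.getD_eq_getElem _ _ (by simpa using Nat.mod_lt j hp)]
  simpa [subword] using h.apply_mod j hj

theorem wordIndex_eq_sSup_isRun (u : ℕ → α) :
    wordIndex u = sSup {x : EReal | ∃ p i L : ℕ, 0 < p ∧ IsRun u p i L ∧
      x = ((1 + (L : ℝ) / p : ℝ) : EReal)} := by
  have exponent_eq {p : ℕ} (hp : 0 < p) (L : ℕ) :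
      ((p + L : ℕ) : ℝ) / p = 1 + (L : ℝ) / p := by
    rw [Nat.cast_add, add_div, div_self (by positivity)]
  apply le_antisymm
  · refine sSup_le ?_
    rintro _ ⟨w, hw, -, rfl⟩
    refine sSup_le ?_
    rintro _ ⟨m, hm, hfactor, rfl⟩
    have hw : 0 < w.length := List.length_pos_iff.mpr hw
    obtain ⟨L, rfl⟩ := Nat.exists_eq_add_of_le hm
    obtain ⟨i, hrun⟩ := exists_isRun_of_isFactor_powPrefix hfactor
    exact le_sSup ⟨w.length, i, L, hw, hrun, by rw [exponent_eq hw]⟩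
  · refine sSup_le ?_
    rintro _ ⟨p, i, L, hp, hrun, rfl⟩
    have hne : subword u i p ≠ [] := by
      rwa [← List.length_pos_iff, length_subword]
    refine le_sSup_of_le ⟨_, hne, isFactor_subword u i p, rfl⟩ (le_sSup ⟨p + L, ?_⟩)
    rw [length_subword, exponent_eq hp]
    exact ⟨Nat.le_add_right p L, hrun.isFactor_powPrefix_subword hp, rfl⟩

end Words

/-! ### Runs in the coding of a rotation -/

section Coding

open Int (fract)

lemma floor_sub_eq_ite {t : ℝ} (ht : t ∈ Set.Icc (0 : ℝ) 1) (y : ℝ) :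
    ⌊y - t⌋ = ⌊y⌋ - if fract y < t then 1 else 0 := by
  have hy := Int.floor_add_fract y
  have hy0 := Int.fract_nonneg y
  have hy1 := Int.fract_lt_one y
  rw [Int.floor_eq_iff]
  split_ifs with h <;> push_cast <;> constructor <;> linarith [ht.1, ht.2]

lemma fract_lt_iff_fract_sub_lt_comm {s t : ℝ} (hs : s ∈ Set.Icc (0 : ℝ) 1)
    (ht : t ∈ Set.Icc (0 : ℝ) 1) (y : ℝ) :
    (fract y < s ↔ fract (y - t) < s) ↔ (fract y < t ↔ fract (y - s) < t) := by
  have hst := floor_sub_eq_ite ht (y - s)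
  have hts := floor_sub_eq_ite hs (y - t)
  rw [floor_sub_eq_ite hs, sub_right_comm] at hst
  rw [floor_sub_eq_ite ht] at hts
  split_ifs at hst hts <;> grind

lemma T2_fract {ε : ℝ} (hε : ε ∈ Set.Icc (0 : ℝ) 1) (y : ℝ) :
    T2 ε (fract y) = fract (y - ε) := by
  have hfloor := floor_sub_eq_ite hε y
  unfold T2
  split_ifs at hfloor ⊢ <;> simp only [fract, hfloor] <;> push_cast <;> ring

variable {ε x0 : ℝ}

lemma T2_iterate (hε : ε ∈ Set.Icc (0 : ℝ) 1) (hx0 : x0 ∈ Set.Ico (0 : ℝ) 1) (n : ℕ) :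
    (T2 ε)^[n] x0 = fract (x0 - n * ε) := by
  induction n with
  | zero => simp [Int.fract_eq_self.mpr hx0]
  | succ n ih =>
    rw [Function.iterate_succ_apply', ih, T2_fract hε]
    push_cast
    ring_nf

lemma u2_eq_u2_iff (hε : ε ∈ Set.Icc (0 : ℝ) 1) (hx0 : x0 ∈ Set.Ico (0 : ℝ) 1) (j k : ℕ) :
    u2 ε x0 j = u2 ε x0 k ↔ (fract (x0 - j * ε) < ε ↔ fract (x0 - k * ε) < ε) := by
  simp only [u2, T2_iterate hε hx0]
  grind

lemma u2_eq_u2_add_iff (hε : ε ∈ Set.Icc (0 : ℝ) 1) (hx0 : x0 ∈ Set.Ico (0 : ℝ) 1) (j p : ℕ) :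
    u2 ε x0 j = u2 ε x0 (j + p) ↔
      (fract (x0 - j * ε) < fract (p * ε) ↔ fract (x0 - (j + 1 : ℕ) * ε) < fract (p * ε)) := by
  have hf : fract ((p : ℝ) * ε) ∈ Set.Icc (0 : ℝ) 1 :=
    ⟨Int.fract_nonneg _, (Int.fract_lt_one _).le⟩
  have hp : fract (x0 - (j + p : ℕ) * ε) = fract (x0 - j * ε - fract (p * ε)) := by
    rw [Int.fract_eq_fract]
    refine ⟨-⌊p * ε⌋, ?_⟩
    rw [fract]
    push_cast
    ring
  have hsucc : x0 - (j + 1 : ℕ) * ε = x0 - j * ε - ε := by push_cast; ring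
  rw [u2_eq_u2_iff hε hx0, hp, hsucc, fract_lt_iff_fract_sub_lt_comm hε hf]

lemma isRun_u2_iff (hε : ε ∈ Set.Icc (0 : ℝ) 1) (hx0 : x0 ∈ Set.Ico (0 : ℝ) 1) {p i L : ℕ} :
    IsRun (u2 ε x0) p i L ↔ ∀ j ≤ L,
      (fract (x0 - (i + j : ℕ) * ε) < fract (p * ε) ↔ fract (x0 - i * ε) < fract (p * ε)) := by
  simp only [IsRun, u2_eq_u2_add_iff hε hx0]
  refine ⟨fun h j => ?_, fun h j hj => (h j hj.le).trans (h (j + 1) hj).symm⟩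
  induction j with
  | zero => simp
  | succ j ih => exact fun hj => (h j hj).symm.trans (ih (by omega))

end Coding

/-! ### Rotations and Farey neighbours -/

section Rotation

open Int (fract)

variable {ε : ℝ}

lemma one_sub_le_fract_of_fract_add_lt {x η : ℝ} (h : fract (x + η) < η) :
    1 - η ≤ fract x := by
  by_contra! hx
  have hη : 0 ≤ η := (Int.fract_nonneg _).trans h.le
  have hadd : fract (x + η) = fract x + η := by
    rw [Int.fract_eq_iff]
    exact ⟨by linarith [Int.fract_nonneg x], by linarith, ⌊x⌋, by rw [fract]; ring⟩
  linarith [Int.fract_nonneg x]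

/- Each of the points `y - n ε`, `n < q + r`, can be moved down by at most `δ`: pass to `n + q` if
`n < r`, and to `n - r` otherwise. So the lowest one must lie below `δ`. -/
lemma exists_fract_sub_mul_lt {q r : ℕ} {a b : ℤ} {δ : ℝ} (hqr : 0 < q + r)
    (hq : q * ε - a ∈ Set.Ioc 0 δ) (hr : b - r * ε ∈ Set.Ioc 0 δ) (y : ℝ) :
    ∃ n < q + r, fract (y - n * ε) < δ := by
  have hne : (Finset.range (q + r)).Nonempty := Finset.nonempty_range_iff.mpr hqr.ne'
  obtain ⟨n, hn, hmin⟩ :=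
    Finset.exists_min_image _ (fun n : ℕ => fract (y - n * ε)) hne
  rw [Finset.mem_range] at hn
  refine ⟨n, hn, ?_⟩
  by_contra! hδ
  have no_lower {m : ℕ} {c : ℤ} {d : ℝ} (hm : m < q + r) (hd : d ∈ Set.Ioc 0 δ)
      (h : y - m * ε = y - n * ε - d + c) : False := by
    have hfract : fract (y - m * ε) = fract (y - n * ε) - d := by
      rw [Int.fract_eq_iff]
      refine ⟨by linarith [hd.2], by linarith [hd.1, Int.fract_lt_one (y - n * ε)],
        ⌊y - n * ε⌋ + c, ?_⟩
      rw [h, fract]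
      push_cast
      ring
    linarith [hd.1, hmin m (Finset.mem_range.mpr hm)]
  rcases lt_or_ge n r with hnr | hrn
  · refine no_lower (m := n + q) (c := -a) (by omega) hq ?_
    push_cast
    ring
  · refine no_lower (m := n - r) (c := b) (by omega) hr ?_
    rw [Nat.cast_sub hrn]
    ring

/-- The fractions `a / q < b / r` are Farey neighbours enclosing `ε`; a zero denominator stands for
a fraction `± 1 / 0` at infinity. -/
structure FareyPair (ε : ℝ) (q r : ℕ) (a b : ℤ) : Prop where
  left_pos : 0 < q * ε - a
  right_pos : 0 < b - r * ε
  det : (q : ℤ) * b - r * a = 1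

namespace FareyPair

variable {q r : ℕ} {a b : ℤ}

lemma neg (h : FareyPair ε q r a b) : FareyPair (-ε) r q (-b) (-a) where
  left_pos := by push_cast; linarith [h.right_pos]
  right_pos := by push_cast; linarith [h.left_pos]
  det := by linarith [h.det]

lemma add_pos (h : FareyPair ε q r a b) : 0 < q + r := by
  by_contra! hqr
  obtain ⟨rfl, rfl⟩ : q = 0 ∧ r = 0 := by omega
  simpa using h.det

lemma exists_coords (h : FareyPair ε q r a b) (n k : ℤ) : ∃ x y : ℤ,
    n = x * q + y * r ∧ n * ε - k = x * (q * ε - a) - y * (b - r * ε) := by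
  refine ⟨n * b - k * r, k * q - n * a, by linear_combination (-n) * h.det, ?_⟩
  have hdet : (q : ℝ) * b - r * a = 1 := mod_cast h.det
  push_cast
  linear_combination (k - n * ε) * hdet

lemma left_le_or_le_neg_right (h : FareyPair ε q r a b) {n : ℕ} (hn : 0 < n) (hn' : n < q + r)
    (k : ℤ) : q * ε - a ≤ n * ε - k ∨ n * ε - k ≤ -(b - r * ε) := by
  obtain ⟨x, y, hnxy, herr⟩ := h.exists_coords n k
  have hl := h.left_pos
  have hr := h.right_pos
  rw [Int.cast_natCast] at herr
  rw [herr]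
  rcases le_or_gt 1 x with hx | hx
  · have hy : y ≤ 0 := by by_contra! hy; nlinarith
    have hx' : (1 : ℝ) ≤ x := mod_cast hx
    have hy' : (y : ℝ) ≤ 0 := mod_cast hy
    left; nlinarith
  · have hx : x ≤ 0 := by omega
    have hy : 1 ≤ y := by by_contra! hy; nlinarith
    have hx' : (x : ℝ) ≤ 0 := mod_cast hx
    have hy' : (1 : ℝ) ≤ y := mod_cast hy
    right; nlinarith

lemma left_le_abs (h : FareyPair ε q r a b) {n : ℕ} (hn : 0 < n) (hnr : n < r) (k : ℤ) :
    q * ε - a ≤ |n * ε - k| := by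
  have hr := h.right_pos
  have hn_gap := h.left_le_or_le_neg_right hn (by omega) k
  have hnq_gap := h.left_le_or_le_neg_right (n := n + q) (by omega) (by omega) (k + a)
  push_cast at hnq_gap
  rw [le_abs]
  rcases hn_gap with hup | hdown
  · exact Or.inl hup
  · rcases hnq_gap with hup' | hdown'
    · linarith
    · right; linarith

lemma right_le_abs (h : FareyPair ε q r a b) {n : ℕ} (hn : 0 < n) (hnq : n < q) (k : ℤ) :
    b - r * ε ≤ |n * ε - k| := by
  have := h.neg.left_le_abs hn hnq (-k)
  rw [← abs_neg]
  push_cast at this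
  ring_nf at this ⊢
  exact this

lemma left_le_fract_sub_mul (h : FareyPair ε q r a b) {x : ℝ}
    (hx : q * ε - a - (b - r * ε) ≤ x) (hx' : x < q * ε - a) {n : ℕ} (hn : 0 < n)
    (hn' : n < q + r) : q * ε - a ≤ fract (x - n * ε) := by
  have h0 := Int.fract_nonneg (x - n * ε)
  have hgap := h.left_le_or_le_neg_right hn hn' (-⌊x - n * ε⌋)
  rw [fract] at h0 ⊢
  push_cast at hgap
  rcases hgap with hgap | hgap <;> linarith

lemma fract_sub_mul_lt_one_sub_right (h : FareyPair ε q r a b) {x : ℝ}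
    (hx : -(b - r * ε) ≤ x) (hx' : x < q * ε - a - (b - r * ε)) {n : ℕ} (hn : 0 < n)
    (hn' : n < q + r) : fract (x - n * ε) < 1 - (b - r * ε) := by
  have h1 := Int.fract_lt_one (x - n * ε)
  have hgap := h.left_le_or_le_neg_right hn hn' (-(⌊x - n * ε⌋ + 1))
  rw [fract] at h1 ⊢
  push_cast at hgap
  rcases hgap with hgap | hgap <;> linarith

end FareyPair

end Rotation

/-! ### Convergents -/

/-- The numerators of the convergents of `ε`, shifted by one as in `qq`: `convNum ε 0 = p₋₁ = 1`
and `convNum ε 1 = p₀ = 0`. -/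
noncomputable def convNum (ε : ℝ) : ℕ → ℤ
  | 0 => 1
  | 1 => 0
  | (n + 2) => cfa ε n * convNum ε (n + 1) + convNum ε n

/-- The signed approximation error `q_{n-1} ε - p_{n-1}` of a convergent, with the index shift
of `qq`. -/
noncomputable def convErr (ε : ℝ) (n : ℕ) : ℝ :=
  qq ε n * ε - convNum ε n

section Convergents

open Int (fract)

variable {ε : ℝ}

lemma convNum_mul_qq_sub (ε : ℝ) (n : ℕ) :
    (qq ε (n + 1) : ℤ) * convNum ε n - qq ε n * convNum ε (n + 1) = (-1) ^ n := by
  induction n with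
  | zero => simp [qq, convNum]
  | succ n ih =>
    simp only [qq, convNum]
    push_cast
    linear_combination (-1) * ih

lemma convErr_add_two (ε : ℝ) (n : ℕ) :
    convErr ε (n + 2) = cfa ε n * convErr ε (n + 1) + convErr ε n := by
  simp only [convErr, qq, convNum]
  push_cast
  ring

lemma irrational_gaussMap {x : ℝ} (hx : Irrational x) : Irrational (gaussMap x) :=
  hx.inv.sub_intCast _

lemma gaussMap_mem_Ioo {x : ℝ} (hx : Irrational x) : gaussMap x ∈ Set.Ioo (0 : ℝ) 1 :=
  ⟨(Int.fract_nonneg _).lt_of_ne' (irrational_gaussMap hx).ne_zero, Int.fract_lt_one _⟩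

lemma irrational_gaussMap_iterate (hirr : Irrational ε) (n : ℕ) :
    Irrational (gaussMap^[n] ε) := by
  induction n with
  | zero => exact hirr
  | succ n ih =>
    rw [Function.iterate_succ_apply']
    exact irrational_gaussMap ih

variable (hirr : Irrational ε) (hε : ε ∈ Set.Ioo (0 : ℝ) 1)
include hirr hε

lemma gaussMap_iterate_mem_Ioo (n : ℕ) : gaussMap^[n] ε ∈ Set.Ioo (0 : ℝ) 1 := by
  cases n with
  | zero => exact hε
  | succ n =>
    rw [Function.iterate_succ_apply']
    exact gaussMap_mem_Ioo (irrational_gaussMap_iterate hirr n)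

lemma inv_gaussMap_iterate (n : ℕ) :
    (gaussMap^[n] ε)⁻¹ = cfa ε n + gaussMap^[n + 1] ε := by
  have hpos : 0 ≤ (gaussMap^[n] ε)⁻¹ :=
    inv_nonneg.mpr (gaussMap_iterate_mem_Ioo hirr hε n).1.le
  rw [Function.iterate_succ_apply', cfa, gaussMap, natCast_floor_eq_intCast_floor hpos,
    Int.floor_add_fract]

lemma cfa_pos (n : ℕ) : 0 < cfa ε n := by
  obtain ⟨hpos, hlt⟩ := gaussMap_iterate_mem_Ioo hirr hε n
  exact Nat.floor_pos.mpr ((one_le_inv₀ hpos).mpr hlt.le)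

lemma convErr_succ (n : ℕ) :
    convErr ε (n + 1) = -(gaussMap^[n] ε * convErr ε n) := by
  induction n with
  | zero => simp [convErr, qq, convNum]
  | succ n ih =>
    have hne := (gaussMap_iterate_mem_Ioo hirr hε n).1.ne'
    have hprev : convErr ε n = -((gaussMap^[n] ε)⁻¹ * convErr ε (n + 1)) := by
      rw [ih]
      field_simp
    rw [convErr_add_two, hprev, inv_gaussMap_iterate hirr hε]
    ring

lemma neg_one_pow_mul_convErr_pos (n : ℕ) : 0 < (-1) ^ (n + 1) * convErr ε n := by
  induction n with
  | zero => simp [convErr, qq, convNum]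
  | succ n ih =>
    have hg := (gaussMap_iterate_mem_Ioo hirr hε n).1
    have hsplit : (-1) ^ (n + 1 + 1) * convErr ε (n + 1) =
        gaussMap^[n] ε * ((-1) ^ (n + 1) * convErr ε n) := by
      rw [convErr_succ hirr hε]
      ring
    rw [hsplit]
    exact mul_pos hg ih

lemma abs_convErr_pos (n : ℕ) : 0 < |convErr ε n| :=
  abs_pos.mpr (right_ne_zero_of_mul (neg_one_pow_mul_convErr_pos hirr hε n).ne')

lemma strictAnti_abs_convErr : StrictAnti fun n => |convErr ε n| := by
  refine strictAnti_nat_of_succ_lt fun n => ?_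
  obtain ⟨hpos, hlt⟩ := gaussMap_iterate_mem_Ioo hirr hε n
  rw [convErr_succ hirr hε, abs_neg, abs_mul, abs_of_pos hpos]
  exact mul_lt_of_lt_one_left (abs_convErr_pos hirr hε n) hlt

lemma abs_convErr_succ_lt_one (n : ℕ) : |convErr ε (n + 1)| < 1 := by
  have h := strictAnti_abs_convErr hirr hε n.succ_pos
  simpa [convErr, qq, convNum] using h

lemma farey_convergents (n : ℕ) :
    (FareyPair ε (qq ε n) (qq ε (n + 1)) (convNum ε n) (convNum ε (n + 1)) ∧
      0 < convErr ε n ∧ convErr ε (n + 1) < 0) ∨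
    (FareyPair ε (qq ε (n + 1)) (qq ε n) (convNum ε (n + 1)) (convNum ε n) ∧
      convErr ε n < 0 ∧ 0 < convErr ε (n + 1)) := by
  have hn := neg_one_pow_mul_convErr_pos hirr hε n
  have hn' := neg_one_pow_mul_convErr_pos hirr hε (n + 1)
  have hdet := convNum_mul_qq_sub ε n
  rw [pow_succ] at hn hn'
  simp only [pow_succ] at hn hn'
  rcases n.even_or_odd with hpar | hpar <;> simp only [hpar.neg_one_pow] at hn hn' hdet
  · have hneg : convErr ε n < 0 := by linarith
    have hpos : 0 < convErr ε (n + 1) := by linarith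
    exact Or.inr ⟨⟨hpos, sub_pos.mpr (sub_neg.mp hneg), hdet⟩, hneg, hpos⟩
  · have hpos : 0 < convErr ε n := by linarith
    have hneg : convErr ε (n + 1) < 0 := by linarith
    exact Or.inl ⟨⟨hpos, sub_pos.mpr (sub_neg.mp hneg), by linarith⟩, hpos, hneg⟩

lemma abs_convErr_le_abs_mul_sub {n p : ℕ} (hp : 0 < p) (hpn : p < qq ε (n + 1)) (k : ℤ) :
    |convErr ε n| ≤ |p * ε - k| := by
  rcases farey_convergents hirr hε n with ⟨hfarey, hpos, -⟩ | ⟨hfarey, hneg, -⟩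
  · rw [abs_of_pos hpos]
    exact hfarey.left_le_abs hp hpn k
  · rw [abs_of_neg hneg, convErr, neg_sub]
    exact hfarey.right_le_abs hp hpn k

lemma exists_fract_sub_mul_lt_abs_convErr (n : ℕ) (y : ℝ) :
    ∃ m < qq ε n + qq ε (n + 1), fract (y - m * ε) < |convErr ε n| := by
  have hle := (strictAnti_abs_convErr hirr hε n.lt_succ_self).le
  dsimp only at hle
  rcases farey_convergents hirr hε n with ⟨hfarey, hpos, hneg⟩ | ⟨hfarey, hneg, hpos⟩
  · rw [abs_of_pos hpos, abs_of_neg hneg, convErr, neg_sub] at hle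
    rw [abs_of_pos hpos]
    exact exists_fract_sub_mul_lt hfarey.add_pos ⟨hfarey.left_pos, le_rfl⟩
      ⟨hfarey.right_pos, hle⟩ y
  · rw [abs_of_neg hneg, abs_of_pos hpos] at hle
    rw [abs_of_neg hneg, add_comm]
    refine exists_fract_sub_mul_lt hfarey.add_pos ⟨hfarey.left_pos, hle⟩
      ⟨hfarey.right_pos, ?_⟩ y
    rw [convErr, neg_sub]

lemma qq_add_qq_le (n : ℕ) : qq ε n + qq ε (n + 1) ≤ qq ε (n + 2) := by
  rw [qq, add_comm]
  gcongr
  exact Nat.le_mul_of_pos_left _ (cfa_pos hirr hε n)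

lemma fib_le_qq (n : ℕ) : Nat.fib n ≤ qq ε n := by
  induction n using Nat.twoStepInduction with
  | zero => simp
  | one => simp [qq]
  | more n ih ih' =>
    rw [Nat.fib_add_two]
    exact (add_le_add ih ih').trans (qq_add_qq_le hirr hε n)

lemma qq_succ_pos (n : ℕ) : 0 < qq ε (n + 1) :=
  (Nat.fib_pos.mpr n.succ_pos).trans_le (fib_le_qq hirr hε (n + 1))

lemma exists_qq_le_and_lt {p : ℕ} (hp : 0 < p) : ∃ n, qq ε (n + 1) ≤ p ∧ p < qq ε (n + 2) := by
  have hunbounded : ∃ n, p < qq ε (n + 2) := by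
    have hfib := fib_le_qq hirr hε (p + 2)
    have hgrowth := Nat.le_fib_add_one (p + 2)
    exact ⟨p, by omega⟩
  refine ⟨Nat.find hunbounded, ?_, Nat.find_spec hunbounded⟩
  rcases hfind : Nat.find hunbounded with _ | n
  · exact hp
  · exact not_lt.mp (Nat.find_min hunbounded (m := n) (by omega))

lemma two_add_cfa_add_eq (N : ℕ) :
    2 + (cfa ε N : ℝ) + ((qq ε N : ℝ) - 2) / qq ε (N + 1) =
      1 + ((qq ε (N + 1) : ℝ) + qq ε (N + 2) - 2) / qq ε (N + 1) := by
  have hq : (0 : ℝ) < qq ε (N + 1) := mod_cast qq_succ_pos hirr hε N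
  have hrec : (qq ε (N + 2) : ℝ) = cfa ε N * qq ε (N + 1) + qq ε N := by simp [qq]
  rw [hrec]
  field_simp
  ring

end Convergents

/-! ### Longest runs in a Sturmian word -/

section Sturmian

open Int (fract)

variable {ε x0 : ℝ}

lemma FareyPair.isRun_left {q r i L : ℕ} {a b : ℤ} (h : FareyPair ε q r a b)
    (hε : ε ∈ Set.Icc (0 : ℝ) 1) (hx0 : x0 ∈ Set.Ico (0 : ℝ) 1) (hlt : q * ε - a < 1)
    (hi : fract (x0 - (q * ε - a - (b - r * ε)) - i * ε) < b - r * ε) (hL : L + 2 ≤ q + r) :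
    IsRun (u2 ε x0) q (i + 1) L := by
  have hf : fract ((q : ℝ) * ε) = q * ε - a :=
    Int.fract_eq_iff.mpr ⟨h.left_pos.le, hlt, a, by ring⟩
  set g := fract (x0 - (q * ε - a - (b - r * ε)) - i * ε) with hg
  have hg0 : 0 ≤ g := Int.fract_nonneg _
  have hfar (m : ℕ) (hm : 0 < m) (hm' : m < q + r) :
      q * ε - a ≤ fract (x0 - (i + m : ℕ) * ε) := by
    have hshift : fract (x0 - (i + m : ℕ) * ε) =
        fract (q * ε - a - (b - r * ε) + g - m * ε) := by
      refine Int.fract_eq_fract.mpr ⟨⌊x0 - (q * ε - a - (b - r * ε)) - i * ε⌋, ?_⟩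
      rw [hg, fract]
      push_cast
      ring
    rw [hshift]
    exact h.left_le_fract_sub_mul (by linarith) (by linarith) hm hm'
  refine (isRun_u2_iff hε hx0).mpr fun j hj => ?_
  rw [hf, add_assoc]
  exact iff_of_false (hfar (1 + j) (by omega) (by omega)).not_gt
    (hfar 1 one_pos (by omega)).not_gt

lemma FareyPair.isRun_right {q r i L : ℕ} {a b : ℤ} (h : FareyPair ε q r a b)
    (hε : ε ∈ Set.Icc (0 : ℝ) 1) (hx0 : x0 ∈ Set.Ico (0 : ℝ) 1) (hlt : b - r * ε < 1)
    (hi : fract (x0 + (b - r * ε) - i * ε) < q * ε - a) (hL : L + 2 ≤ q + r) :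
    IsRun (u2 ε x0) r (i + 1) L := by
  have hr := h.right_pos
  have hf : fract ((r : ℝ) * ε) = 1 - (b - r * ε) :=
    Int.fract_eq_iff.mpr ⟨by linarith, by linarith, b - 1, by push_cast; ring⟩
  set g := fract (x0 + (b - r * ε) - i * ε) with hg
  have hg0 : 0 ≤ g := Int.fract_nonneg _
  have hnear (m : ℕ) (hm : 0 < m) (hm' : m < q + r) :
      fract (x0 - (i + m : ℕ) * ε) < 1 - (b - r * ε) := by
    have hshift : fract (x0 - (i + m : ℕ) * ε) = fract (-(b - r * ε) + g - m * ε) := by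
      refine Int.fract_eq_fract.mpr ⟨⌊x0 + (b - r * ε) - i * ε⌋, ?_⟩
      rw [hg, fract]
      push_cast
      ring
    rw [hshift]
    exact h.fract_sub_mul_lt_one_sub_right (by linarith) (by linarith) hm hm'
  refine (isRun_u2_iff hε hx0).mpr fun j hj => ?_
  rw [hf, add_assoc]
  exact iff_of_true (hnear (1 + j) (by omega) (by omega)) (hnear 1 one_pos (by omega))

variable (hirr : Irrational ε) (hε : ε ∈ Set.Ioo (0 : ℝ) 1) (hx0 : x0 ∈ Set.Ico (0 : ℝ) 1)
include hirr hε hx0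

theorem exists_isRun_qq (n : ℕ) : ∃ i L, L + 2 = qq ε (n + 1) + qq ε (n + 2) ∧
    IsRun (u2 ε x0) (qq ε (n + 1)) i L := by
  have hε' := Set.Ioo_subset_Icc_self hε
  have hlt := abs_convErr_succ_lt_one hirr hε n
  have hq := qq_succ_pos hirr hε n
  have hr : 0 < qq ε (n + 2) := qq_succ_pos hirr hε (n + 1)
  obtain ⟨L, hL⟩ := Nat.exists_eq_add_of_le' (show 2 ≤ qq ε (n + 1) + qq ε (n + 2) by omega)
  have hhit (y : ℝ) := exists_fract_sub_mul_lt_abs_convErr hirr hε (n + 2) y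
  rcases farey_convergents hirr hε (n + 1) with ⟨hfarey, hpos, hneg⟩ | ⟨hfarey, hneg, hpos⟩
  · obtain ⟨i, -, hi⟩ := hhit (x0 - (convErr ε (n + 1) - -convErr ε (n + 2)))
    rw [abs_of_pos hpos] at hlt
    rw [abs_of_neg hneg, convErr, convErr, neg_sub] at hi
    exact ⟨i + 1, L, hL.symm, hfarey.isRun_left hε' hx0 hlt hi hL.ge⟩
  · obtain ⟨i, -, hi⟩ := hhit (x0 + -convErr ε (n + 1))
    rw [abs_of_neg hneg, convErr, neg_sub] at hlt
    rw [abs_of_pos hpos, convErr, convErr, neg_sub] at hi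
    exact ⟨i + 1, L, hL.symm, hfarey.isRun_right hε' hx0 hlt hi
      (hL.ge.trans_eq (add_comm _ _))⟩

theorem IsRun.add_two_le {p i L n : ℕ} (hrun : IsRun (u2 ε x0) p i L) (hp : 0 < p)
    (hpn : p < qq ε (n + 1)) : L + 2 ≤ qq ε n + qq ε (n + 1) := by
  have happrox := abs_convErr_le_abs_mul_sub hirr hε hp hpn
  have hlow : |convErr ε n| ≤ fract ((p : ℝ) * ε) := by
    simpa only [Int.self_sub_floor, Int.abs_fract] using happrox ⌊p * ε⌋
  have hhigh : fract ((p : ℝ) * ε) ≤ 1 - |convErr ε n| := by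
    have h := happrox (⌊p * ε⌋ + 1)
    push_cast at h
    rw [← sub_sub, Int.self_sub_floor, abs_sub_comm,
      abs_of_pos (sub_pos.mpr (Int.fract_lt_one _))] at h
    linarith
  obtain ⟨m, hm, hmfract⟩ := exists_fract_sub_mul_lt_abs_convErr hirr hε n (x0 - i * ε)
  obtain ⟨m', hm', hmfract'⟩ :=
    exists_fract_sub_mul_lt_abs_convErr hirr hε n (x0 - i * ε + |convErr ε n|)
  rw [add_sub_right_comm] at hmfract'
  have hsplit (m : ℕ) : x0 - (i + m : ℕ) * ε = x0 - i * ε - m * ε := by push_cast; ring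
  by_contra! hL
  have hside := (isRun_u2_iff (Set.Ioo_subset_Icc_self hε) hx0).mp hrun
  have hin := hside m (by omega)
  have hout := hside m' (by omega)
  rw [hsplit] at hin hout
  exact (hhigh.trans (one_sub_le_fract_of_fract_add_lt hmfract')).not_gt
    (hout.mpr (hin.mp (hmfract.trans_le hlow)))

end Sturmian

/-- the index of a Sturmian word of slope `ε` equals
`sup { 2 + a_{N+1} + (q_{N-1} - 2)/q_N : N ≥ 0 }` (in `ℝ ∪ {+∞}`). -/
theorem sturmian_index_formula
    (ε x0 : ℝ) (hirr : Irrational ε) (h0 : 0 < ε) (h1 : ε < 1)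
    (hx0 : x0 ∈ Set.Ico (0:ℝ) 1) :
    wordIndex (u2 ε x0) =
      sSup {x : EReal | ∃ N : ℕ,
        x = ((2 + (cfa ε N : ℝ) + ((qq ε N : ℝ) - 2) / (qq ε (N+1) : ℝ) : ℝ) : EReal)} := by
  have hε : ε ∈ Set.Ioo (0 : ℝ) 1 := ⟨h0, h1⟩
  rw [wordIndex_eq_sSup_isRun]
  apply le_antisymm <;> refine sSup_le ?_
  · rintro _ ⟨p, i, L, hp, hrun, rfl⟩
    obtain ⟨N, hNp, hpN⟩ := exists_qq_le_and_lt hirr hε hp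
    refine le_sSup_of_le ⟨N, rfl⟩ (EReal.coe_le_coe ?_)
    have hq : (0 : ℝ) < qq ε (N + 1) := mod_cast qq_succ_pos hirr hε N
    have hL : (L : ℝ) + 2 ≤ qq ε (N + 1) + qq ε (N + 2) :=
      mod_cast hrun.add_two_le hirr hε hx0 hp hpN
    rw [two_add_cfa_add_eq hirr hε]
    have hL' := le_sub_iff_add_le.mpr hL
    have hnonneg := (Nat.cast_nonneg (α := ℝ) L).trans hL'
    gcongr
  · rintro _ ⟨N, rfl⟩
    obtain ⟨i, L, hL, hrun⟩ := exists_isRun_qq hirr hε hx0 N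
    refine le_sSup ⟨qq ε (N + 1), i, L, qq_succ_pos hirr hε N, hrun, ?_⟩
    have hL : (L : ℝ) + 2 = qq ε (N + 1) + qq ε (N + 2) := mod_cast hL
    rw [two_add_cfa_add_eq hirr hε, ← hL, add_sub_cancel_right]
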